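/- Let n ≥ 1 and let K = {A_i : i ∈ ℕ} be a countable family of pairwise nonisomorphic structures in Mod. Then K is =_ℕ^{n+}-learnable if and only if for all i ≠ j there exists a set C ∈ Σ⁰_{2n-1}(Mod) such that either (every S ≅ A_i is in C and no S ≅ A_j is in C) or (every S ≅ A_j is in C and no S ≅ A_i is in C). -/

import Mathlib

/-!  Common definitions.

`Tower n` is the space ℕ^(ℕ^(n+1)) of the paper: `Tower 0 = ℕ → ℕ`,
`Tower (n+1) = ℕ → Tower n`, each with the product topology (ℕ discrete).
-/

def Tower : ℕ → Type
  | 0 => ℕ → ℕ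
  | n + 1 => ℕ → Tower n

instance Tower.topologicalSpace : (n : ℕ) → TopologicalSpace (Tower n)
  | 0 => inferInstanceAs (TopologicalSpace (ℕ → ℕ))
  | n + 1 => letI := Tower.topologicalSpace n
             inferInstanceAs (TopologicalSpace (ℕ → Tower n))

/-- The Friedman–Stanley jump `E⁺` of an equivalence relation `E` on `X`. -/
def FSJump {X : Type*} (E : X → X → Prop) (p q : ℕ → X) : Prop :=
  (∀ k, ∃ l, E (p k) (q l)) ∧ ∀ l, ∃ k, E (q l) (p k)

/-- The power `E^ω` of an equivalence relation `E` on `X`. -/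
def RelPow {X : Type*} (E : X → X → Prop) (p q : ℕ → X) : Prop :=
  ∀ k, E (p k) (q k)

/-- `eqNatPlus n` is the relation `=_ℕ^{(n+1)+}` on `Tower n = ℕ^(ℕ^(n+1))`. -/
def eqNatPlus : (n : ℕ) → Tower n → Tower n → Prop
  | 0 => FSJump (· = · : ℕ → ℕ → Prop)
  | n + 1 => FSJump (eqNatPlus n)

/-- `eqBairePlus n` is the relation `=_{ℕ^ℕ}^{(n+1)+}` on `Tower (n+1) = ℕ^(ℕ^(n+2))`. -/
def eqBairePlus : (n : ℕ) → Tower (n + 1) → Tower (n + 1) → Prop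
  | 0 => FSJump (· = · : (ℕ → ℕ) → (ℕ → ℕ) → Prop)
  | n + 1 => FSJump (eqBairePlus n)

/-- `FullRel m` on `Tower m = ℕ^(ℕ^(m+1))`: for `m = 2n` it is `(=_ℕ^+)^{n(ω+)}`,
for `m = 2n+1` it is `(=_{ℕ^ℕ}^+)^{n(ω+)}` (with `E^{0(ω+)} = E`,
`E^{(n+1)(ω+)} = ((E^{n(ω+)})^ω)^+`). -/
def FullRel : (m : ℕ) → Tower m → Tower m → Prop
  | 0 => FSJump (· = · : ℕ → ℕ → Prop)
  | 1 => FSJump (· = · : (ℕ → ℕ) → (ℕ → ℕ) → Prop)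
  | m + 2 => FSJump (RelPow (FullRel m))

/-- The pair of canonical elements `(F_{m+1}, I_{m+1})` of `Tower m = ℕ^(ℕ^(m+1))`. -/
def can : (m : ℕ) → Tower m × Tower m
  | 0 => (fun k => if k = 0 then 0 else 1, fun _ => 1)
  | 1 => (fun i k => if i = 0 then 0 else if k + 1 < i then 0 else 1,
          fun i k => if k < i then 0 else 1)
  | m + 2 =>
      (fun i k => if i = 0 then (can m).1 else if k + 1 < i then (can m).1 else (can m).2,
       fun i k => if k < i then (can m).1 else (can m).2)

/-- The canonical element `F_{m+1} ∈ ℕ^(ℕ^(m+1))`. -/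
def canF (m : ℕ) : Tower m := (can m).1

/-- The canonical element `I_{m+1} ∈ ℕ^(ℕ^(m+1))`. -/
def canI (m : ℕ) : Tower m := (can m).2

/-- `p ∈ Tower m = ℕ^(ℕ^(m+1))` is `full_{m+1}`. -/
def IsFull (m : ℕ) (p : Tower m) : Prop := FullRel m p (canF m)

/-- `p ∈ Tower m = ℕ^(ℕ^(m+1))` is `initial_{m+1}`. -/
def IsInitial (m : ℕ) (p : Tower m) : Prop := FullRel m p (canI m)

open Classical in
/-- The permission operator `∧₀`. -/
noncomputable def perm0 (p q : ℕ → ℕ) : ℕ → ℕ :=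
  fun k => if ∀ j ≤ k, p j = q j then p k else 1

/-- The permission operator `∧_{m+1}` on `Tower m = ℕ^(ℕ^(m+1))`
(with `⟨·,·⟩ = Nat.pair`). -/
noncomputable def perm : (m : ℕ) → Tower m → Tower m → Tower m
  | 0, p, q => fun x => max (p (Nat.unpair x).1) (q (Nat.unpair x).2)
  | 1, p, q => fun x => perm0 (p (Nat.unpair x).1) (q (Nat.unpair x).2)
  | m + 2, p, q => fun x k => perm m (p (Nat.unpair x).1 k) (q (Nat.unpair x).2 k)

/-- The operator `⊗_{m+1,i}` on `Tower m = ℕ^(ℕ^(m+1))` (with `⟨·,·⟩ = Nat.pair`). -/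
def otimes : (m : ℕ) → ℕ → Tower m → Tower m
  | 0, i, p => fun k => Nat.pair (p k) i
  | m + 1, i, p => fun k => otimes m i (p k)

/-- `E` continuously reduces to `F`. -/
def ContReduces {X Y : Type*} [TopologicalSpace X] [TopologicalSpace Y]
    (E : X → X → Prop) (F : Y → Y → Prop) : Prop :=
  ∃ f : X → Y, Continuous f ∧ ∀ x x', E x x' ↔ F (f x) (f x')

/-- `SigmaLevel X n` is the pointclass `Σ⁰_{n+1}(X)`: `Σ⁰_1` = open sets,
`Σ⁰_{n+1}` = countable unions of complements of `Σ⁰_n` sets. -/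
def SigmaLevel (X : Type*) [TopologicalSpace X] : ℕ → Set (Set X)
  | 0 => {C | IsOpen C}
  | n + 1 => {C | ∃ A : ℕ → Set X, (∀ i, A i ∈ SigmaLevel X n) ∧ C = ⋃ i, (A i)ᶜ}

/-- The space of `(ι, ar)`-structures with domain ℕ. -/
def Md (ι : Type) (ar : ι → ℕ) : Type := ∀ i : ι, (Fin (ar i) → ℕ) → Bool

instance (ι : Type) (ar : ι → ℕ) : TopologicalSpace (Md ι ar) :=
  inferInstanceAs (TopologicalSpace (∀ i : ι, (Fin (ar i) → ℕ) → Bool))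

/-- Isomorphism of structures with domain ℕ. -/
def Iso {ι : Type} {ar : ι → ℕ} (A B : Md ι ar) : Prop :=
  ∃ σ : ℕ → ℕ, Function.Bijective σ ∧ ∀ i v, A i v = B i (σ ∘ v)

/-- The learning domain of a family: the closure of `K` under isomorphism. -/
def LearnDom {ι : Type} {ar : ι → ℕ} (K : Set (Md ι ar)) : Set (Md ι ar) :=
  {S | ∃ A ∈ K, Iso S A}

/-- The family `K` is `E`-learnable. -/
def Learnable {ι : Type} {ar : ι → ℕ} {X : Type*} [TopologicalSpace X]
    (E : X → X → Prop) (K : Set (Md ι ar)) : Prop :=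
  ∃ Γ : LearnDom K → X, Continuous Γ ∧
    ∀ S S' : LearnDom K, (Iso S.1 S'.1 ↔ E (Γ S) (Γ S'))

/-- A countable family of pairwise nonisomorphic structures. -/
def GoodFamily {ι : Type} {ar : ι → ℕ} (K : Set (Md ι ar)) : Prop :=
  K.Countable ∧ ∀ A ∈ K, ∀ B ∈ K, A ≠ B → ¬ Iso A B

/-- `E` is learn-reducible to `F` (w.r.t. structures in `Md ι ar`). -/
def LearnRed (ι : Type) (ar : ι → ℕ) {X Y : Type*} [TopologicalSpace X]
    [TopologicalSpace Y] (E : X → X → Prop) (F : Y → Y → Prop) : Prop :=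
  ∀ K : Set (Md ι ar), GoodFamily K → Learnable E K → Learnable F K

/-- `E` is compact for learning (w.r.t. structures in `Md ι ar`). -/
def CompactForLearning (ι : Type) (ar : ι → ℕ) {X : Type*} [TopologicalSpace X]
    (E : X → X → Prop) : Prop :=
  ∀ K : Set (Md ι ar), GoodFamily K →
    (Learnable E K ↔ ∀ A ∈ K, ∀ B ∈ K, A ≠ B → Learnable E ({A, B} : Set (Md ι ar)))

/-! The learning direction pulls back along the learner: if `p` and `q` are not `E⁺`-equivalent,
then one of the invariant sets `{r | ∃ k, E x (r k)}` separates them, and two complexity levels are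
gained with every jump.

For the converse, the Vaught transform with respect to the action of the permutations of `ℕ` turns
each separating set into an isomorphism-invariant one of the same complexity. An invariant set
`C = ⋃ k, ⋂ j, B k j` with `B k` decreasing is then coded by recursion on its complexity: given
codes `a` for membership and `b` for non-membership in the sets `B k j`, list for each `k` the
sequence of the codes of `B k j`, which is constantly `a` if and only if the point lies in
`⋂ j, B k j` and otherwise starts with finitely many `a`s followed by `b`s. Adding all sequences of
the latter kind to the list leaves exactly two jump classes. Countably many codes are finally
combined into one, since tagging makes `E⁺` absorb countable powers. -/

open Set TopologicalSpace Topology MulAction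

section SigmaLevel

variable {X Y : Type*} [TopologicalSpace X] [TopologicalSpace Y] {κ : Type*} [Countable κ] {n : ℕ}

theorem preimage_mem_sigmaLevel {f : X → Y} (hf : Continuous f) {C : Set Y}
    (hC : C ∈ SigmaLevel Y n) : f ⁻¹' C ∈ SigmaLevel X n := by
  induction n generalizing C with
  | zero => exact IsOpen.preimage hf hC
  | succ n ih =>
    obtain ⟨A, hA, rfl⟩ := hC
    exact ⟨fun i => f ⁻¹' A i, fun i => ih (hA i), by simp only [preimage_iUnion, preimage_compl]⟩

theorem exists_preimage_eq_of_isInducing {f : X → Y} (hf : IsInducing f) {C : Set X}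
    (hC : C ∈ SigmaLevel X n) : ∃ D ∈ SigmaLevel Y n, f ⁻¹' D = C := by
  induction n generalizing C with
  | zero => exact hf.isOpen_iff.1 hC
  | succ n ih =>
    obtain ⟨A, hA, rfl⟩ := hC
    choose D hD hDA using fun i => ih (hA i)
    exact ⟨⋃ i, (D i)ᶜ, ⟨D, hD, rfl⟩, by simp only [preimage_iUnion, preimage_compl, hDA]⟩

theorem compl_mem_sigmaLevel_succ {C : Set X} (hC : C ∈ SigmaLevel X n) :
    Cᶜ ∈ SigmaLevel X (n + 1) :=
  ⟨fun _ => C, fun _ => hC, (iUnion_const _).symm⟩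

theorem univ_mem_sigmaLevel_and_empty_mem_sigmaLevel (n : ℕ) :
    (univ : Set X) ∈ SigmaLevel X n ∧ (∅ : Set X) ∈ SigmaLevel X n := by
  induction n with
  | zero => exact ⟨isOpen_univ, isOpen_empty⟩
  | succ n ih =>
    exact ⟨compl_empty (α := X) ▸ compl_mem_sigmaLevel_succ ih.2,
      compl_univ (α := X) ▸ compl_mem_sigmaLevel_succ ih.1⟩

theorem iUnion_compl_mem_sigmaLevel_succ {A : κ → Set X} (hA : ∀ k, A k ∈ SigmaLevel X n) :
    ⋃ k, (A k)ᶜ ∈ SigmaLevel X (n + 1) := by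
  cases isEmpty_or_nonempty κ with
  | inl _ => simpa only [iUnion_of_empty]
      using (univ_mem_sigmaLevel_and_empty_mem_sigmaLevel (n + 1)).2
  | inr _ =>
    obtain ⟨e, he⟩ := exists_surjective_nat κ
    exact ⟨A ∘ e, fun i => hA (e i), (he.iUnion_comp fun k => (A k)ᶜ).symm⟩

theorem iUnion_mem_sigmaLevel {A : κ → Set X} (hA : ∀ k, A k ∈ SigmaLevel X n) :
    ⋃ k, A k ∈ SigmaLevel X n := by
  cases n with
  | zero => exact isOpen_iUnion hA
  | succ n =>
    choose B hB hAB using hA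
    have hunion : ⋃ k, A k = ⋃ p : κ × ℕ, (B p.1 p.2)ᶜ :=
      (iUnion_congr hAB).trans (iUnion_prod' fun p : κ × ℕ => (B p.1 p.2)ᶜ).symm
    exact hunion ▸ iUnion_compl_mem_sigmaLevel_succ fun p => hB p.1 p.2

theorem union_mem_sigmaLevel {A B : Set X} (hA : A ∈ SigmaLevel X n) (hB : B ∈ SigmaLevel X n) :
    A ∪ B ∈ SigmaLevel X n := by
  rw [union_eq_iUnion]
  exact iUnion_mem_sigmaLevel (Bool.forall_bool.2 ⟨hB, hA⟩)

theorem inter_mem_sigmaLevel {A B : Set X} (hA : A ∈ SigmaLevel X n) (hB : B ∈ SigmaLevel X n) :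
    A ∩ B ∈ SigmaLevel X n := by
  cases n with
  | zero => exact IsOpen.inter hA hB
  | succ n =>
    obtain ⟨A, hA, rfl⟩ := hA
    obtain ⟨B, hB, rfl⟩ := hB
    have hinter : (⋃ i, (A i)ᶜ) ∩ ⋃ j, (B j)ᶜ = ⋃ p : ℕ × ℕ, (A p.1 ∪ B p.2)ᶜ := by
      simp only [iUnion_inter_iUnion, compl_union, iUnion_prod']
    exact hinter ▸ iUnion_compl_mem_sigmaLevel_succ fun p => union_mem_sigmaLevel (hA p.1) (hB p.2)

theorem dissipate_mem_sigmaLevel {A : ℕ → Set X} (hA : ∀ i, A i ∈ SigmaLevel X n) (j : ℕ) :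
    dissipate A j ∈ SigmaLevel X n := by
  induction j with
  | zero => exact dissipate_zero_nat A ▸ hA 0
  | succ j ih => exact dissipate_succ A j ▸ inter_mem_sigmaLevel ih (hA (j + 1))

theorem exists_iUnion_iInter_antitone_of_mem_sigmaLevel {C : Set X}
    (hC : C ∈ SigmaLevel X (n + 2)) :
    ∃ B : ℕ → ℕ → Set X, (∀ k j, B k j ∈ SigmaLevel X n) ∧ (∀ k, Antitone (B k)) ∧
      C = ⋃ k, ⋂ j, B k j := by
  obtain ⟨D, hD, rfl⟩ := hC
  choose A hA hDA using hD
  refine ⟨fun k => dissipate (A k), fun k => dissipate_mem_sigmaLevel (hA k),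
    fun _ => antitone_dissipate, ?_⟩
  simp only [iInter_dissipate, hDA, compl_iUnion, compl_compl]

theorem baireMeasurableSet_of_mem_sigmaLevel {C : Set X} (hC : C ∈ SigmaLevel X n) :
    BaireMeasurableSet C := by
  induction n generalizing C with
  | zero => exact IsOpen.baireMeasurableSet hC
  | succ n ih =>
    obtain ⟨A, hA, rfl⟩ := hC
    exact .iUnion fun i => (ih (hA i)).compl

end SigmaLevel

section VaughtTransform

variable {G X : Type*} [TopologicalSpace G]

theorem not_isMeagre_inter_iff [BaireSpace G] [SecondCountableTopology G] {s U : Set G}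
    (hs : BaireMeasurableSet s) (hU : IsOpen U) :
    ¬ IsMeagre (s ∩ U) ↔ ∃ V ∈ countableBasis G, V ⊆ U ∧ IsMeagre (V \ s) := by
  constructor
  · intro hsU
    obtain ⟨O, hO, hsO⟩ := hs.residualEq_isOpen
    have hsO_meagre : IsMeagre (s \ O) := by
      filter_upwards [hsO.mem_iff] with g hg using fun h => h.2 (hg.1 h.1)
    have hOs_meagre : IsMeagre (O \ s) := by
      filter_upwards [hsO.mem_iff] with g hg using fun h => h.2 (hg.2 h.1)
    have hOU : (O ∩ U).Nonempty := by
      by_contra hempty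
      refine hsU (hsO_meagre.mono ?_)
      exact fun g hg => ⟨hg.1, fun hgO => hempty ⟨g, hgO, hg.2⟩⟩
    obtain ⟨g, hg⟩ := hOU
    obtain ⟨V, hV, -, hVOU⟩ :=
      (isBasis_countableBasis G).exists_subset_of_mem_open hg (hO.inter hU)
    refine ⟨V, hV, fun _ h => (hVOU h).2, hOs_meagre.mono ?_⟩
    exact fun _ h => ⟨(hVOU h.1).1, h.2⟩
  · rintro ⟨V, hV, hVU, hVs⟩ hsU
    refine not_isMeagre_of_isOpen (isOpen_of_mem_countableBasis hV)
      (nonempty_of_mem_countableBasis hV) ((hVs.union hsU).mono fun g hg => ?_)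
    by_cases hgs : g ∈ s
    · exact .inr ⟨hgs, hVU hg⟩
    · exact .inl ⟨hg, hgs⟩

/-- The Vaught transform `C^{ΔU}`: the points that are moved into `C` by non-meagrely many
elements of `U`. It makes sets invariant without raising their complexity. -/
def vaughtTransform [SMul G X] (U : Set G) (C : Set X) : Set X :=
  {x | ¬ IsMeagre ({g : G | g • x ∈ C} ∩ U)}

theorem vaughtTransform_eq_iUnion_preimage [BaireSpace G] [SMul G X] [TopologicalSpace X]
    (hG : ∀ x : X, Continuous fun g : G => g • x) {C : Set X} (hC : IsOpen C) {U : Set G}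
    (hU : IsOpen U) : vaughtTransform U C = ⋃ g ∈ U, (g • ·) ⁻¹' C := by
  ext x
  simp only [mem_iUnion, mem_preimage, exists_prop]
  constructor
  · intro hx
    obtain ⟨g, hgC, hgU⟩ := nonempty_of_not_isMeagre hx
    exact ⟨g, hgU, hgC⟩
  · rintro ⟨g, hgU, hgC⟩
    exact not_isMeagre_of_isOpen ((hC.preimage (hG x)).inter hU) ⟨g, hgC, hgU⟩

theorem vaughtTransform_iUnion_compl [BaireSpace G] [SecondCountableTopology G] [SMul G X]
    {A : ℕ → Set X} (hA : ∀ i x, BaireMeasurableSet {g : G | g • x ∈ A i}) {U : Set G}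
    (hU : IsOpen U) :
    vaughtTransform U (⋃ i, (A i)ᶜ) =
      ⋃ p : ℕ × {V // V ∈ countableBasis G ∧ V ⊆ U}, (vaughtTransform p.2.1 (A p.1))ᶜ := by
  ext x
  have hunion : {g : G | g • x ∈ ⋃ i, (A i)ᶜ} ∩ U = ⋃ i, {g : G | g • x ∈ A i}ᶜ ∩ U := by
    rw [← iUnion_inter]
    congr 1
    exact preimage_iUnion (f := fun g : G => g • x)
  have hmem : x ∈ vaughtTransform U (⋃ i, (A i)ᶜ) ↔
      ∃ i, ¬ IsMeagre ({g : G | g • x ∈ A i}ᶜ ∩ U) := by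
    refine Iff.trans (not_congr ?_) not_forall
    rw [hunion]
    refine ⟨fun h i => h.mono ?_, isMeagre_iUnion⟩
    exact subset_iUnion (fun i => {g : G | g • x ∈ A i}ᶜ ∩ U) i
  have hmem_compl (i : ℕ) (V : Set G) :
      IsMeagre (V \ {g : G | g • x ∈ A i}ᶜ) ↔ x ∈ (vaughtTransform V (A i))ᶜ := by
    rw [sdiff_compl, inter_comm]
    exact not_not.symm
  simp only [hmem, not_isMeagre_inter_iff (hA _ x).compl hU, hmem_compl, mem_iUnion, Prod.exists,
    Subtype.exists, exists_prop, and_assoc]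

theorem vaughtTransform_mem_sigmaLevel [BaireSpace G] [SecondCountableTopology G] [SMul G X]
    [TopologicalSpace X] [ContinuousConstSMul G X] (hG : ∀ x : X, Continuous fun g : G => g • x)
    {n : ℕ} {C : Set X} (hC : C ∈ SigmaLevel X n) {U : Set G} (hU : IsOpen U) :
    vaughtTransform U C ∈ SigmaLevel X n := by
  induction n generalizing C U with
  | zero =>
    rw [vaughtTransform_eq_iUnion_preimage hG hC hU]
    exact isOpen_biUnion fun g _ => IsOpen.preimage (continuous_const_smul g) hC
  | succ n ih =>
    obtain ⟨A, hA, rfl⟩ := hC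
    have hmeas (i : ℕ) (x : X) : BaireMeasurableSet {g : G | g • x ∈ A i} :=
      baireMeasurableSet_of_mem_sigmaLevel (preimage_mem_sigmaLevel (hG x) (hA i))
    have : Countable {V // V ∈ countableBasis G ∧ V ⊆ U} :=
      ((countable_countableBasis G).mono fun _ h => h.1).to_subtype
    rw [vaughtTransform_iUnion_compl hmeas hU]
    exact iUnion_compl_mem_sigmaLevel_succ fun p =>
      ih (hA p.1) (isOpen_of_mem_countableBasis p.2.2.1)

theorem smul_mem_vaughtTransform_univ_iff [Group G] [SeparatelyContinuousMul G] [MulAction G X]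
    {C : Set X} (h : G) (x : X) :
    h • x ∈ vaughtTransform (univ : Set G) C ↔ x ∈ vaughtTransform (univ : Set G) C := by
  have hpreimage (h : G) (x : X) :
      {g : G | g • h • x ∈ C} = (Homeomorph.mulRight h) ⁻¹' {g | g • x ∈ C} := by
    ext g
    exact iff_of_eq (congrArg (· ∈ C) (smul_smul g h x))
  have hmeagre (h : G) (x : X) (hx : IsMeagre {g : G | g • x ∈ C}) :
      IsMeagre {g : G | g • h • x ∈ C} :=
    hpreimage h x ▸ hx.preimage_of_isOpenMap (Homeomorph.continuous _) (Homeomorph.isOpenMap _)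
  simp only [vaughtTransform, inter_univ]
  exact not_congr ⟨fun H => by simpa only [inv_smul_smul] using hmeagre h⁻¹ (h • x) H, hmeagre h x⟩

theorem mem_vaughtTransform_univ_of_orbit_subset [BaireSpace G] [Nonempty G] [SMul G X]
    {C : Set X} {x : X} (hx : orbit G x ⊆ C) : x ∈ vaughtTransform (univ : Set G) C := by
  have hall : {g : G | g • x ∈ C} = univ := eq_univ_of_forall fun g => hx (mem_orbit x g)
  intro hmeagre
  rw [hall, inter_univ] at hmeagre
  exact not_isMeagre_of_isOpen isOpen_univ univ_nonempty hmeagre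

theorem notMem_vaughtTransform_of_disjoint_orbit [SMul G X] {U : Set G}
    {C : Set X} {x : X} (hx : Disjoint (orbit G x) C) : x ∉ vaughtTransform U C := by
  have hnone : {g : G | g • x ∈ C} = ∅ :=
    eq_empty_of_forall_notMem fun g hg => disjoint_left.1 hx (mem_orbit x g) hg
  exact not_not_intro (by rw [hnone, empty_inter]; exact .empty)

end VaughtTransform

section PermutationGroup

variable {α : Type*} [TopologicalSpace α]

/-- The topology of pointwise convergence of permutations and of their inverses. For discrete `α`
this is the usual topology on `Sym(α)`; recording the inverse makes the embedding into
`(α → α) × (α → α)` closed. -/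
instance permTopologicalSpace : TopologicalSpace (Equiv.Perm α) :=
  .induced (fun σ => ((σ : α → α), (σ.symm : α → α))) inferInstance

theorem continuous_perm_iff {Z : Type*} [TopologicalSpace Z] {f : Z → Equiv.Perm α} :
    Continuous f ↔ (∀ a, Continuous fun z => f z a) ∧ ∀ a, Continuous fun z => (f z).symm a :=
  continuous_induced_rng.trans <| continuous_prodMk.trans <|
    and_congr continuous_pi_iff continuous_pi_iff

variable [DiscreteTopology α]

instance : SeparatelyContinuousMul (Equiv.Perm α) where
  continuous_const_mul {σ} := by
    have hid := continuous_perm_iff.1 (continuous_id (X := Equiv.Perm α))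
    exact continuous_perm_iff.2
      ⟨fun a => continuous_of_discreteTopology.comp (hid.1 a), fun a => hid.2 (σ.symm a)⟩
  continuous_mul_const {σ} := by
    have hid := continuous_perm_iff.1 (continuous_id (X := Equiv.Perm α))
    exact continuous_perm_iff.2
      ⟨fun a => hid.1 (σ a), fun a => continuous_of_discreteTopology.comp (hid.2 a)⟩

theorem isClosedEmbedding_perm :
    IsClosedEmbedding fun σ : Equiv.Perm α => ((σ : α → α), (σ.symm : α → α)) := by
  refine ⟨⟨⟨rfl⟩, fun σ τ h => Equiv.coe_fn_injective (Prod.ext_iff.1 h).1⟩, ?_⟩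
  have hrange : range (fun σ : Equiv.Perm α => ((σ : α → α), (σ.symm : α → α))) =
      ⋂ a, {p : (α → α) × (α → α) | p.2 (p.1 a) = a} ∩ {p | p.1 (p.2 a) = a} := by
    ext ⟨f, g⟩
    refine Iff.trans ⟨?_, fun h => ?_⟩ mem_iInter.symm
    · rintro ⟨σ, hσ⟩ a
      obtain ⟨rfl, rfl⟩ := Prod.ext_iff.1 hσ
      exact ⟨σ.symm_apply_apply a, σ.apply_symm_apply a⟩
    · exact ⟨⟨f, g, fun a => (h a).1, fun a => (h a).2⟩, rfl⟩
  have heval : Continuous fun p : (α → α) × α => p.1 p.2 :=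
    continuous_prod_of_discrete_right.2 continuous_apply
  rw [hrange]
  refine isClosed_iInter fun a => .inter (isClosed_eq ?_ continuous_const)
    (isClosed_eq ?_ continuous_const)
  · exact heval.comp (continuous_snd.prodMk ((continuous_apply a).comp continuous_fst))
  · exact heval.comp (continuous_fst.prodMk ((continuous_apply a).comp continuous_snd))

instance [Countable α] : PolishSpace (Equiv.Perm α) := by
  obtain ⟨e, he⟩ := exists_injective_nat α
  have : PolishSpace α :=
    (IsClosedEmbedding.of_continuous_injective_isClosedMap continuous_of_discreteTopology he
      fun _ _ => isClosed_discrete _).polishSpace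
  exact isClosedEmbedding_perm.polishSpace

end PermutationGroup

section Structures

variable {ι : Type} {ar : ι → ℕ}

/-- The logic action: `σ • S` is the structure that makes `σ` an isomorphism from `S`. -/
instance : MulAction (Equiv.Perm ℕ) (Md ι ar) where
  smul σ S i v := S i (σ.symm ∘ v)
  one_smul _ := rfl
  mul_smul _ _ _ := rfl

theorem continuous_perm_smul (S : Md ι ar) : Continuous fun σ : Equiv.Perm ℕ => σ • S := by
  have hid := continuous_perm_iff.1 (continuous_id (X := Equiv.Perm ℕ))
  exact continuous_pi fun i => continuous_pi fun v =>
    (continuous_of_discreteTopology (f := S i)).comp (continuous_pi fun m => hid.2 (v m))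

instance : ContinuousConstSMul (Equiv.Perm ℕ) (Md ι ar) where
  continuous_const_smul σ := continuous_pi fun i => continuous_pi fun v =>
    (continuous_apply (σ.symm ∘ v)).comp (continuous_apply i)

theorem iso_iff_mem_orbit {A B : Md ι ar} : Iso A B ↔ A ∈ orbit (Equiv.Perm ℕ) B := by
  constructor
  · rintro ⟨σ, hσ, hAB⟩
    exact ⟨(Equiv.ofBijective σ hσ).symm, funext₂ fun i v => (hAB i v).symm⟩
  · rintro ⟨σ, rfl⟩
    exact ⟨σ.symm, σ.symm.bijective, fun _ _ => rfl⟩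

theorem iso_equivalence : Equivalence (Iso : Md ι ar → Md ι ar → Prop) := by
  have horbit : (Iso : Md ι ar → Md ι ar → Prop) = orbitRel (Equiv.Perm ℕ) (Md ι ar) :=
    funext₂ fun A B => propext iso_iff_mem_orbit
  exact horbit ▸ (orbitRel (Equiv.Perm ℕ) (Md ι ar)).iseqv

end Structures

section Jump

variable {Y : Type*}

theorem fsJump_equivalence {E : Y → Y → Prop} (hE : Equivalence E) : Equivalence (FSJump E) where
  refl p := ⟨fun k => ⟨k, hE.refl _⟩, fun k => ⟨k, hE.refl _⟩⟩
  symm h := h.symm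
  trans {p q r} hpq hqr := by
    have hcover {p q r : ℕ → Y} (hpq : ∀ k, ∃ l, E (p k) (q l)) (hqr : ∀ k, ∃ l, E (q k) (r l))
        (k : ℕ) : ∃ l, E (p k) (r l) := by
      obtain ⟨l, hl⟩ := hpq k
      obtain ⟨m, hm⟩ := hqr l
      exact ⟨m, hE.trans hl hm⟩
    exact ⟨hcover hpq.1 hqr.1, hcover hqr.2 hpq.2⟩

theorem eqNatPlus_equivalence (m : ℕ) : Equivalence (eqNatPlus m) := by
  induction m with
  | zero => exact fsJump_equivalence eq_equivalence
  | succ m ih => exact fsJump_equivalence ih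

/-- The sequence `p 0, q 0, p 1, q 1, …`, used to join two lists of codes. -/
def interleave (p q : ℕ → Y) : ℕ → Y :=
  Sum.elim p q ∘ Equiv.natSumNatEquivNat.symm

theorem range_interleave (p q : ℕ → Y) : range (interleave p q) = range p ∪ range q := by
  rw [interleave, EquivLike.range_comp, Sum.elim_range]

theorem fsJump_iff_forall_mem_range {E : Y → Y → Prop} {p q : ℕ → Y} :
    FSJump E p q ↔
      (∀ y ∈ range p, ∃ z ∈ range q, E y z) ∧ ∀ z ∈ range q, ∃ y ∈ range p, E z y := by
  simp only [FSJump, forall_mem_range, exists_range_iff]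

end Jump

section Codes

variable {X Y Z : Type*} [TopologicalSpace X] [TopologicalSpace Y] [TopologicalSpace Z]

theorem ContReduces.trans {E : X → X → Prop} {F : Y → Y → Prop} {H : Z → Z → Prop}
    (hEF : ContReduces E F) (hFH : ContReduces F H) : ContReduces E H := by
  obtain ⟨f, hf, hEF⟩ := hEF
  obtain ⟨g, hg, hFH⟩ := hFH
  exact ⟨g ∘ f, hg.comp hf, fun x x' => (hEF x x').trans (hFH _ _)⟩

theorem contReduces_relPow_of_forall {r : ℕ → X → X → Prop} {E : Y → Y → Prop}
    (h : ∀ t, ContReduces (r t) E) : ContReduces (fun x y => ∀ t, r t x y) (RelPow E) := by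
  choose f hf hrE using h
  exact ⟨fun x t => f t x, continuous_pi hf, fun x y => forall_congr' fun t => hrE t x y⟩

/-- `E` has a tagging if points can be continuously marked with natural numbers in such a way that
`E` compares both the marks and the points. The paper's `⊗` is such an operation. -/
def HasTagging (E : Y → Y → Prop) : Prop :=
  ∃ τ : ℕ → Y → Y, (∀ t, Continuous (τ t)) ∧ ∀ s t x y, E (τ s x) (τ t y) ↔ s = t ∧ E x y

theorem hasTagging_eq_nat : HasTagging (· = · : ℕ → ℕ → Prop) :=
  ⟨Nat.pair, fun _ => continuous_of_discreteTopology, fun _ _ _ _ => Nat.pair_eq_pair⟩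

theorem HasTagging.fsJump {E : Y → Y → Prop} (hE : HasTagging E) : HasTagging (FSJump E) := by
  obtain ⟨τ, hτ, hEτ⟩ := hE
  refine ⟨fun t p k => τ t (p k),
    fun t => continuous_pi fun k => (hτ t).comp (continuous_apply k), fun s t p q => ?_⟩
  simp only [FSJump, hEτ, exists_and_left, forall_and, forall_const]
  grind

theorem HasTagging.contReduces_relPow_fsJump {E : Y → Y → Prop} (hE : HasTagging E) :
    ContReduces (RelPow (FSJump E)) (FSJump E) := by
  obtain ⟨τ, hτ, hEτ⟩ := hE
  refine ⟨fun p z => τ z.unpair.1 (p z.unpair.1 z.unpair.2), ?_, fun p q => ?_⟩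
  · exact continuous_pi fun z =>
      (hτ _).comp ((continuous_apply z.unpair.2).comp (continuous_apply z.unpair.1))
  · have hcover (p q : ℕ → ℕ → Y) :
        (∀ z : ℕ, ∃ w : ℕ, E (τ z.unpair.1 (p z.unpair.1 z.unpair.2))
          (τ w.unpair.1 (q w.unpair.1 w.unpair.2))) ↔ ∀ i k, ∃ l, E (p i k) (q i l) :=
      calc
        _ ↔ ∀ z : ℕ × ℕ, ∃ w : ℕ × ℕ, E (τ z.1 (p z.1 z.2)) (τ w.1 (q w.1 w.2)) :=
          (Nat.surjective_unpair.forall.trans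
            (forall_congr' fun _ => Nat.surjective_unpair.exists)).symm
        _ ↔ _ := by
          simp only [hEτ, Prod.forall, Prod.exists, exists_and_left, exists_eq_left']
    exact forall_and.trans (and_congr (hcover p q).symm (hcover q p).symm)

theorem contReduces_relPow_eqNatPlus (m : ℕ) :
    ContReduces (RelPow (eqNatPlus m)) (eqNatPlus m) := by
  have htagging (m : ℕ) : HasTagging (eqNatPlus m) := by
    induction m with
    | zero => exact hasTagging_eq_nat.fsJump
    | succ m ih => exact ih.fsJump
  cases m with
  | zero => exact hasTagging_eq_nat.contReduces_relPow_fsJump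
  | succ m => exact (htagging m).contReduces_relPow_fsJump

theorem continuous_interleave {p : X → ℕ → Y} (hp : Continuous p) (q : ℕ → Y) :
    Continuous fun x => interleave (p x) q := by
  refine continuous_pi fun k => ?_
  change Continuous fun x => Sum.elim (p x) q (Equiv.natSumNatEquivNat.symm k)
  cases Equiv.natSumNatEquivNat.symm k with
  | inl i => exact (continuous_apply i).comp hp
  | inr i => exact continuous_const

/-- `f` codes membership in `C` up to `E`: points of `C` get codes equivalent to `a`, all others
get codes equivalent to an element of `N`. -/
def ReducesToClasses (E : Y → Y → Prop) (a : Y) (N : Set Y) (C : Set X) : Prop :=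
  ∃ f : X → Y, Continuous f ∧ (∀ x ∈ C, E (f x) a) ∧ ∀ x ∉ C, ∃ y ∈ N, E (f x) y

theorem ReducesToClasses.trans {E : Y → Y → Prop} {F : Z → Z → Prop} {a : Y} {N : Set Y} {C : Set X}
    {u : Y → Z} (hC : ReducesToClasses E a N C) (hu : Continuous u)
    (hEF : ∀ y y', E y y' → F (u y) (u y')) : ReducesToClasses F (u a) (u '' N) C := by
  obtain ⟨f, hf, hmem, hnotMem⟩ := hC
  refine ⟨u ∘ f, hu.comp hf, fun x hx => hEF _ _ (hmem x hx), fun x hx => ?_⟩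
  obtain ⟨y, hy, hxy⟩ := hnotMem x hx
  exact ⟨u y, mem_image_of_mem u hy, hEF _ _ hxy⟩

theorem ReducesToClasses.contReduces {E : Y → Y → Prop} (hE : Equivalence E) {a b : Y}
    (hab : ¬ E a b) {C : Set X} (hC : ReducesToClasses E a {b} C) :
    ContReduces (fun x y => (x ∈ C ↔ y ∈ C)) E := by
  obtain ⟨f, hf, hmem, hnotMem⟩ := hC
  have hiff (x : X) : E (f x) a ↔ x ∈ C := by
    refine ⟨fun hxa => ?_, hmem x⟩
    by_contra hx
    obtain ⟨_, rfl, hxb⟩ := hnotMem x hx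
    exact hab (hE.trans (hE.symm hxa) hxb)
  refine ⟨f, hf, fun x y => ⟨fun hxy => ?_, fun hxy => ?_⟩⟩
  · by_cases hx : x ∈ C
    · exact hE.trans (hmem x hx) (hE.symm (hmem y (hxy.1 hx)))
    · obtain ⟨_, rfl, hxb⟩ := hnotMem x hx
      obtain ⟨_, rfl, hyb⟩ := hnotMem y (mt hxy.2 hx)
      exact hE.trans hxb (hE.symm hyb)
  · change x ∈ C ↔ y ∈ C
    rw [← hiff, ← hiff]
    exact ⟨hE.trans (hE.symm hxy), hE.trans hxy⟩

theorem reducesToClasses_of_isClopen {C : Set X} (hC : IsClopen C) :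
    ReducesToClasses (· = · : ℕ → ℕ → Prop) 1 {0} C :=
  ⟨C.indicator 1, hC.continuous_indicator continuous_one, fun _ hx => indicator_of_mem hx 1,
    fun _ hx => ⟨0, rfl, indicator_of_notMem hx 1⟩⟩

theorem ReducesToClasses.iInter_of_antitone {E : Y → Y → Prop} {a b : Y} {B : ℕ → Set X}
    (hanti : Antitone B) (hB : ∀ j, ReducesToClasses E a {b} (B j)) :
    ReducesToClasses (RelPow E) (fun _ => a) (range fun i j => if j < i then a else b)
      (⋂ j, B j) := by
  classical
  choose f hf hmem hnotMem using hB
  refine ⟨fun x j => f j x, continuous_pi hf, fun x hx j => hmem j x (mem_iInter.1 hx j),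
    fun x hx => ?_⟩
  have hex : ∃ j, x ∉ B j := not_forall.1 (mt mem_iInter.2 hx)
  refine ⟨_, mem_range_self (Nat.find hex), fun j => ?_⟩
  dsimp only
  split_ifs with hj
  · exact hmem j x (not_not.1 (Nat.find_min hex hj))
  · obtain ⟨_, rfl, hjb⟩ := hnotMem j x fun hx => Nat.find_spec hex (hanti (not_lt.1 hj) hx)
    exact hjb

theorem ReducesToClasses.iUnion {E : Y → Y → Prop} (hE : Equivalence E) {a : Y} {b : ℕ → Y}
    {B : ℕ → Set X} (hB : ∀ k, ReducesToClasses E a (range b) (B k)) :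
    ReducesToClasses (FSJump E) (interleave (fun _ => a) b) {b} (⋃ k, B k) := by
  choose f hf hmem hnotMem using hB
  have hcode (x : X) (k : ℕ) : E (f k x) a ∨ ∃ i, E (f k x) (b i) := by
    by_cases hx : x ∈ B k
    · exact .inl (hmem k x hx)
    · exact .inr (exists_range_iff.1 (hnotMem k x hx))
  refine ⟨fun x => interleave (fun k => f k x) b, continuous_interleave (continuous_pi hf) b,
    fun x hx => ?_, fun x hx => ⟨b, rfl, ?_⟩⟩
  · obtain ⟨k, hk⟩ := mem_iUnion.1 hx
    rw [fsJump_iff_forall_mem_range]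
    simp only [range_interleave, mem_union, or_imp, forall_and, or_and_right, exists_or,
      forall_mem_range, exists_range_iff]
    exact ⟨⟨fun k => (hcode x k).imp_left fun h => ⟨0, h⟩, fun i => .inr ⟨i, hE.refl _⟩⟩,
      fun _ => .inl ⟨k, hE.symm (hmem k x hk)⟩, fun i => .inr ⟨i, hE.refl _⟩⟩
  · rw [fsJump_iff_forall_mem_range]
    simp only [range_interleave, mem_union, or_imp, forall_and, or_and_right, exists_or,
      forall_mem_range, exists_range_iff]
    exact ⟨⟨fun k => exists_range_iff.1 (hnotMem k x fun hk => hx (mem_iUnion_of_mem k hk)),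
      fun i => ⟨i, hE.refl _⟩⟩, fun i => .inr ⟨i, hE.refl _⟩⟩

theorem exists_iUnion_isClopen [HereditarilyLindelofSpace X]
    (hX : IsTopologicalBasis {s : Set X | IsClopen s}) {C : Set X} (hC : IsOpen C) :
    ∃ B : ℕ → Set X, (∀ k, IsClopen (B k)) ∧ C = ⋃ k, B k := by
  obtain ⟨κ, s, rfl, hs⟩ := hX.open_eq_iUnion hC
  cases isEmpty_or_nonempty κ with
  | inl _ =>
    exact ⟨fun _ => ∅, fun _ => isClopen_empty, by simp only [iUnion_of_empty, iUnion_empty]⟩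
  | inr _ =>
    obtain ⟨e, he⟩ := eq_open_union_nat s fun i => (hs i).isOpen
    exact ⟨s ∘ e, fun k => hs (e k), he.symm⟩

theorem exists_reducesToClasses_eqNatPlus [HereditarilyLindelofSpace X]
    (hX : IsTopologicalBasis {s : Set X | IsClopen s}) (m : ℕ) :
    ∃ a b : Tower m, ¬ eqNatPlus m a b ∧
      ∀ C ∈ SigmaLevel X (2 * m), ReducesToClasses (eqNatPlus m) a {b} C := by
  have hjump {Y : Type} {E : Y → Y → Prop} {a : Y} {b : ℕ → Y} (hab : ∀ i, ¬ E a (b i)) :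
      ¬ FSJump E (interleave (fun _ => a) b) b := fun h => by
    have ha : a ∈ range (interleave (fun _ => a) b) :=
      range_interleave (fun _ => a) b ▸ .inl (mem_range_self 0)
    obtain ⟨_, ⟨i, rfl⟩, hi⟩ := (fsJump_iff_forall_mem_range.1 h).1 a ha
    exact hab i hi
  induction m with
  | zero =>
    refine ⟨_, _, hjump (a := 1) (b := fun _ => 0) fun _ => one_ne_zero, fun C hC => ?_⟩
    obtain ⟨B, hB, rfl⟩ := exists_iUnion_isClopen hX hC
    exact .iUnion eq_equivalence fun k =>
      (range_const (ι := ℕ) (c := 0)).symm ▸ reducesToClasses_of_isClopen (hB k)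
  | succ m ih =>
    obtain ⟨a, b, hab, hcode⟩ := ih
    obtain ⟨u, hu, hpow⟩ := contReduces_relPow_eqNatPlus m
    let N (i j : ℕ) : Tower m := if j < i then a else b
    refine ⟨_, _, hjump (a := u fun _ => a) (b := fun i => u (N i)) fun i h => ?_, fun C hC => ?_⟩
    · exact hab (by simpa only [N, lt_irrefl, if_false] using (hpow _ _).2 h i)
    · obtain ⟨B, hB, hanti, rfl⟩ := exists_iUnion_iInter_antitone_of_mem_sigmaLevel hC
      refine .iUnion (eqNatPlus_equivalence m) fun k => ?_
      change ReducesToClasses _ _ (range (u ∘ N)) _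
      rw [range_comp]
      exact (ReducesToClasses.iInter_of_antitone (hanti k) fun j => hcode _ (hB k j)).trans hu
        fun x y => (hpow x y).1

theorem contReduces_eqNatPlus_of_forall_mem_iff [HereditarilyLindelofSpace X]
    (hX : IsTopologicalBasis {s : Set X | IsClopen s}) {m : ℕ} {r : X → X → Prop} {C : ℕ → Set X}
    (hC : ∀ t, C t ∈ SigmaLevel X (2 * m)) (hr : ∀ x y, r x y ↔ ∀ t, (x ∈ C t ↔ y ∈ C t)) :
    ContReduces r (eqNatPlus m) := by
  obtain ⟨a, b, hab, hcode⟩ := exists_reducesToClasses_eqNatPlus hX m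
  obtain rfl : r = fun x y => ∀ t, (x ∈ C t ↔ y ∈ C t) := funext₂ fun x y => propext (hr x y)
  exact (contReduces_relPow_of_forall fun t =>
    (hcode _ (hC t)).contReduces (eqNatPlus_equivalence m) hab).trans
      (contReduces_relPow_eqNatPlus m)

end Codes

section Separation

variable {X Y : Type*} [TopologicalSpace X] [TopologicalSpace Y] {N : ℕ}

/-- `x` and `y` are separated, in this order, by a `Σ⁰_{N+1}` set that is invariant under `r`. -/
def InvariantlySeparated (N : ℕ) (r : X → X → Prop) (x y : X) : Prop :=
  ∃ C ∈ SigmaLevel X N, (∀ z w, r z w → (z ∈ C ↔ w ∈ C)) ∧ x ∈ C ∧ y ∉ C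

theorem InvariantlySeparated.of_continuous {r : X → X → Prop} {E : Y → Y → Prop} {f : X → Y}
    (hf : Continuous f) (hrE : ∀ x y, r x y → E (f x) (f y)) {x y : X}
    (h : InvariantlySeparated N E (f x) (f y)) : InvariantlySeparated N r x y := by
  obtain ⟨C, hC, hinv, hx, hy⟩ := h
  exact ⟨f ⁻¹' C, preimage_mem_sigmaLevel hf hC, fun z w hzw => hinv _ _ (hrE z w hzw), hx, hy⟩

theorem setOf_exists_rel_mem_sigmaLevel {E : Y → Y → Prop}
    (hclass : ∀ y, {z | E y z} ∈ SigmaLevel Y N) (y : Y) :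
    {q : ℕ → Y | ∃ l, E y (q l)} ∈ SigmaLevel (ℕ → Y) N := by
  rw [ofPred_exists]
  exact iUnion_mem_sigmaLevel fun l => preimage_mem_sigmaLevel (continuous_apply l) (hclass y)

theorem setOf_fsJump_mem_sigmaLevel {E : Y → Y → Prop} (hE : Equivalence E)
    (hclass : ∀ y, {z | E y z} ∈ SigmaLevel Y N) (p : ℕ → Y) :
    {q | FSJump E p q} ∈ SigmaLevel (ℕ → Y) (N + 2) := by
  let D : ℕ ⊕ ℕ → Set (ℕ → Y) :=
    Sum.elim (fun k => {q | ∃ l, E (p k) (q l)}) fun l => {q | ∃ k, E (p k) (q l)}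
  have hD (s : ℕ ⊕ ℕ) : D s ∈ SigmaLevel (ℕ → Y) N := by
    cases s with
    | inl k => exact setOf_exists_rel_mem_sigmaLevel hclass (p k)
    | inr l =>
      change {q : ℕ → Y | ∃ k, E (p k) (q l)} ∈ _
      rw [ofPred_exists]
      exact iUnion_mem_sigmaLevel fun k =>
        preimage_mem_sigmaLevel (continuous_apply l) (hclass (p k))
  have hclass_eq : {q | FSJump E p q} = (⋃ s, (D s)ᶜ)ᶜ := by
    rw [compl_iUnion]
    ext q
    simp only [compl_compl, mem_iInter, Sum.forall]
    exact and_congr_right' (forall_congr' fun l => exists_congr fun k => ⟨hE.symm, hE.symm⟩)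
  exact hclass_eq ▸ compl_mem_sigmaLevel_succ (iUnion_compl_mem_sigmaLevel_succ hD)

theorem invariantlySeparated_fsJump_of_forall_not_rel {E : Y → Y → Prop} (hE : Equivalence E)
    (hclass : ∀ y, {z | E y z} ∈ SigmaLevel Y N) {p q : ℕ → Y} {k : ℕ}
    (hk : ∀ l, ¬ E (p k) (q l)) : InvariantlySeparated N (FSJump E) p q := by
  have htransfer {u v : ℕ → Y} (huv : FSJump E u v) :
      (∃ l, E (p k) (u l)) → ∃ l, E (p k) (v l) := by
    rintro ⟨l, hl⟩
    obtain ⟨m, hm⟩ := huv.1 l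
    exact ⟨m, hE.trans hl hm⟩
  exact ⟨{u | ∃ l, E (p k) (u l)}, setOf_exists_rel_mem_sigmaLevel hclass (p k),
    fun u v huv => ⟨htransfer huv, htransfer huv.symm⟩, ⟨k, hE.refl _⟩, not_exists.2 hk⟩

theorem invariantlySeparated_fsJump_or {E : Y → Y → Prop} (hE : Equivalence E)
    (hclass : ∀ y, {z | E y z} ∈ SigmaLevel Y N) {p q : ℕ → Y} (hpq : ¬ FSJump E p q) :
    InvariantlySeparated N (FSJump E) p q ∨ InvariantlySeparated N (FSJump E) q p := by
  have hsep {p q : ℕ → Y} (h : ¬ ∀ k, ∃ l, E (p k) (q l)) :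
      InvariantlySeparated N (FSJump E) p q := by
    obtain ⟨k, hk⟩ := not_forall.1 h
    exact invariantlySeparated_fsJump_of_forall_not_rel hE hclass (not_exists.1 hk)
  exact (not_and_or.1 hpq).imp hsep hsep

theorem setOf_eq_mem_sigmaLevel_zero [DiscreteTopology Y] (y : Y) :
    {z | y = z} ∈ SigmaLevel Y 0 :=
  isOpen_discrete {z | y = z}

theorem setOf_eqNatPlus_mem_sigmaLevel (m : ℕ) (p : Tower m) :
    {q | eqNatPlus m p q} ∈ SigmaLevel (Tower m) (2 * m + 2) := by
  induction m with
  | zero => exact setOf_fsJump_mem_sigmaLevel eq_equivalence setOf_eq_mem_sigmaLevel_zero p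
  | succ m ih => exact setOf_fsJump_mem_sigmaLevel (eqNatPlus_equivalence m) ih p

theorem invariantlySeparated_eqNatPlus_or (m : ℕ) {p q : Tower m} (hpq : ¬ eqNatPlus m p q) :
    InvariantlySeparated (2 * m) (eqNatPlus m) p q ∨
      InvariantlySeparated (2 * m) (eqNatPlus m) q p := by
  cases m with
  | zero => exact invariantlySeparated_fsJump_or eq_equivalence setOf_eq_mem_sigmaLevel_zero hpq
  | succ m =>
    exact invariantlySeparated_fsJump_or (eqNatPlus_equivalence m)
      (setOf_eqNatPlus_mem_sigmaLevel m) hpq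

theorem exists_forall_rel_iff_forall_mem_iff (r : Setoid X)
    (hsep : ∀ x y, ¬ r x y → InvariantlySeparated N r x y ∨ InvariantlySeparated N r y x) :
    ∃ C : Quotient r × Quotient r → Set X, (∀ t, C t ∈ SigmaLevel X N) ∧
      ∀ x y, r x y ↔ ∀ t, (x ∈ C t ↔ y ∈ C t) := by
  have hset (t : Quotient r × Quotient r) : ∃ C ∈ SigmaLevel X N,
      (∀ x y, r x y → (x ∈ C ↔ y ∈ C)) ∧ ((t.1.out ∈ C ↔ t.2.out ∈ C) → r t.1.out t.2.out) := by
    by_cases ht : r t.1.out t.2.out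
    · exact ⟨∅, (univ_mem_sigmaLevel_and_empty_mem_sigmaLevel N).2, fun _ _ _ => Iff.rfl,
        fun _ => ht⟩
    · obtain ⟨C, hC, hinv, hx, hy⟩ | ⟨C, hC, hinv, hx, hy⟩ := hsep _ _ ht
      · exact ⟨C, hC, hinv, fun h => absurd (h.1 hx) hy⟩
      · exact ⟨C, hC, hinv, fun h => absurd (h.2 hx) hy⟩
  choose C hC hinv hCsep using hset
  refine ⟨C, hC, fun x y => ⟨fun hxy t => hinv t x y hxy, fun hxy => ?_⟩⟩
  have hout (z : X) : r (⟦z⟧ : Quotient r).out z := Quotient.mk_out z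
  have hxyout : r (⟦x⟧ : Quotient r).out (⟦y⟧ : Quotient r).out :=
    hCsep (⟦x⟧, ⟦y⟧) (((hinv _ _ _ (hout x)).trans (hxy _)).trans (hinv _ _ _ (hout y)).symm)
  exact r.trans' (r.symm' (hout x)) (r.trans' hxyout (hout y))

theorem contReduces_eqNatPlus_iff [HereditarilyLindelofSpace X]
    (hX : IsTopologicalBasis {s : Set X | IsClopen s}) (r : Setoid X) [Countable (Quotient r)]
    (n : ℕ) :
    ContReduces r (eqNatPlus n) ↔ ∀ x y, ¬ r x y →
      InvariantlySeparated (2 * n) r x y ∨ InvariantlySeparated (2 * n) r y x := by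
  constructor
  · rintro ⟨f, hf, hr⟩ x y hxy
    exact (invariantlySeparated_eqNatPlus_or n (mt (hr x y).2 hxy)).imp
      (.of_continuous hf fun x y => (hr x y).1) (.of_continuous hf fun x y => (hr x y).1)
  · intro hsep
    cases isEmpty_or_nonempty X with
    | inl _ => exact ⟨isEmptyElim, continuous_of_const isEmptyElim, isEmptyElim⟩
    | inr hne =>
      have : Nonempty (Quotient r) := (nonempty_quotient_iff r).2 hne
      obtain ⟨C, hC, hr⟩ := exists_forall_rel_iff_forall_mem_iff r hsep
      obtain ⟨e, he⟩ := exists_surjective_nat (Quotient r × Quotient r)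
      exact contReduces_eqNatPlus_of_forall_mem_iff hX (fun t => hC (e t)) fun x y =>
        (hr x y).trans (he.forall (p := fun t => x ∈ C t ↔ y ∈ C t))

end Separation

section Learning

theorem isTopologicalBasis_isClopen_of_isInducing {X Y : Type*} [TopologicalSpace X]
    [TopologicalSpace Y] {f : X → Y} (hf : IsInducing f)
    (hY : IsTopologicalBasis {s : Set Y | IsClopen s}) :
    IsTopologicalBasis {s : Set X | IsClopen s} :=
  (hY.isInducing hf).of_isOpen_of_subset (fun _ hs => hs.isOpen)
    (image_subset_iff.2 fun _ hs => hs.preimage hf.continuous)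

theorem hereditarilyLindelofSpace_of_countable_cover {X Z κ : Type*} [TopologicalSpace X]
    [TopologicalSpace Z] [HereditarilyLindelofSpace Z] [Countable κ] {f : κ → Z → X}
    (hf : ∀ k, Continuous (f k)) (hcover : ⋃ k, range (f k) = univ) :
    HereditarilyLindelofSpace X := by
  refine .of_forall_isOpen fun s _ => ?_
  have hs : s = ⋃ k, f k '' (f k ⁻¹' s) := by
    simp only [image_preimage_eq_inter_range, ← inter_iUnion, hcover, inter_univ]
  rw [hs]
  exact isLindelof_iUnion fun k => (HereditarilyLindelofSpace.isLindelof _).image (hf k)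

variable {ι : Type} {ar : ι → ℕ} {K : Set (Md ι ar)}

theorem isTopologicalBasis_isClopen_md : IsTopologicalBasis {s : Set (Md ι ar) | IsClopen s} := by
  have : CompactSpace (Md ι ar) := inferInstanceAs (CompactSpace (∀ i, (Fin (ar i) → ℕ) → Bool))
  have : T2Space (Md ι ar) := inferInstanceAs (T2Space (∀ i, (Fin (ar i) → ℕ) → Bool))
  have : TotallyDisconnectedSpace (Md ι ar) :=
    inferInstanceAs (TotallyDisconnectedSpace (∀ i, (Fin (ar i) → ℕ) → Bool))
  exact isTopologicalBasis_isClopen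

/-- Isomorphism as an equivalence relation on the learning domain of `K`. -/
def isoSetoid (K : Set (Md ι ar)) : Setoid (LearnDom K) :=
  .comap Subtype.val ⟨Iso, iso_equivalence⟩

theorem mem_learnDom_of_iso {S T : Md ι ar} (hST : Iso S T) (hT : T ∈ LearnDom K) :
    S ∈ LearnDom K := by
  obtain ⟨B, hB, hTB⟩ := hT
  exact ⟨B, hB, iso_equivalence.trans hST hTB⟩

theorem subset_learnDom : K ⊆ LearnDom K :=
  fun B hB => ⟨B, hB, iso_equivalence.refl B⟩

theorem countable_quotient_isoSetoid (hK : K.Countable) : Countable (Quotient (isoSetoid K)) := by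
  have := hK.to_subtype
  have hsurj : Function.Surjective fun B : K =>
      (⟦⟨B, subset_learnDom B.2⟩⟧ : Quotient (isoSetoid K)) := by
    refine Quotient.ind fun ⟨S, B, hB, hSB⟩ => ⟨⟨B, hB⟩, Quotient.sound ?_⟩
    exact iso_equivalence.symm hSB
  exact hsurj.countable

theorem hereditarilyLindelofSpace_learnDom (hK : K.Countable) :
    HereditarilyLindelofSpace (LearnDom K) := by
  have := hK.to_subtype
  refine hereditarilyLindelofSpace_of_countable_cover
    (f := fun (B : K) (σ : Equiv.Perm ℕ) =>
      (⟨σ • B.1, B, B.2, iso_iff_mem_orbit.2 (mem_orbit B.1 σ)⟩ : LearnDom K))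
    (fun B => (continuous_perm_smul B.1).subtype_mk _) (eq_univ_of_forall ?_)
  rintro ⟨S, B, hB, hSB⟩
  obtain ⟨σ, rfl⟩ := iso_iff_mem_orbit.1 hSB
  exact mem_iUnion_of_mem ⟨B, hB⟩ (mem_range_self σ)

theorem invariantlySeparated_isoSetoid_iff {N : ℕ} {S T : LearnDom K} :
    InvariantlySeparated N (isoSetoid K) S T ↔ ∃ C ∈ SigmaLevel (Md ι ar) N,
      (∀ S', Iso S' S.1 → S' ∈ C) ∧ ∀ T', Iso T' T.1 → T' ∉ C := by
  constructor
  · rintro ⟨_, hC, hinv, hS, hT⟩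
    obtain ⟨D, hD, rfl⟩ := exists_preimage_eq_of_isInducing .subtypeVal hC
    exact ⟨D, hD, fun S' hS' => (hinv ⟨S', mem_learnDom_of_iso hS' S.2⟩ S hS').2 hS,
      fun T' hT' h => hT ((hinv ⟨T', mem_learnDom_of_iso hT' T.2⟩ T hT').1 h)⟩
  · rintro ⟨C, hC, hS, hT⟩
    refine ⟨Subtype.val ⁻¹' vaughtTransform (univ : Set (Equiv.Perm ℕ)) C,
      preimage_mem_sigmaLevel continuous_subtype_val
        (vaughtTransform_mem_sigmaLevel continuous_perm_smul hC isOpen_univ),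
      fun S₁ S₂ h₁₂ => ?_, ?_, ?_⟩
    · obtain ⟨σ, hσ : σ • S₂.1 = S₁.1⟩ := iso_iff_mem_orbit.1 h₁₂
      simp only [mem_preimage, ← hσ, smul_mem_vaughtTransform_univ_iff]
    · exact mem_vaughtTransform_univ_of_orbit_subset fun S' hS' => hS S' (iso_iff_mem_orbit.2 hS')
    · exact notMem_vaughtTransform_of_disjoint_orbit
        (disjoint_left.2 fun T' hT' => hT T' (iso_iff_mem_orbit.2 hT'))

theorem learnable_eqNatPlus_iff (hK : K.Countable) (n : ℕ) :
    Learnable (eqNatPlus n) K ↔ ∀ S ∈ LearnDom K, ∀ T ∈ LearnDom K, ¬ Iso S T →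
      ∃ C ∈ SigmaLevel (Md ι ar) (2 * n),
        ((∀ S', Iso S' S → S' ∈ C) ∧ (∀ T', Iso T' T → T' ∉ C)) ∨
        ((∀ T', Iso T' T → T' ∈ C) ∧ (∀ S', Iso S' S → S' ∉ C)) := by
  have := countable_quotient_isoSetoid hK
  have := hereditarilyLindelofSpace_learnDom hK
  have hbasis := isTopologicalBasis_isClopen_of_isInducing
    (IsInducing.subtypeVal (t := LearnDom K)) isTopologicalBasis_isClopen_md
  refine (contReduces_eqNatPlus_iff hbasis (isoSetoid K) n).trans ?_
  simp only [invariantlySeparated_isoSetoid_iff, ← exists_or, ← and_or_left, Subtype.forall]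
  rfl

theorem stmt_12_general {κ : Type*} [Countable κ] (n : ℕ) (A : κ → Md ι ar)
    (hA : ∀ i j, i ≠ j → ¬ Iso (A i) (A j)) :
    Learnable (eqNatPlus n) (Set.range A) ↔
      ∀ i j, i ≠ j → ∃ C ∈ SigmaLevel (Md ι ar) (2 * n),
        ((∀ S, Iso S (A i) → S ∈ C) ∧ (∀ S, Iso S (A j) → S ∉ C)) ∨
        ((∀ S, Iso S (A j) → S ∈ C) ∧ (∀ S, Iso S (A i) → S ∉ C)) := by
  rw [learnable_eqNatPlus_iff (countable_range A)]
  constructor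
  · intro hsep i j hij
    exact hsep _ (subset_learnDom ⟨i, rfl⟩) _ (subset_learnDom ⟨j, rfl⟩) (hA i j hij)
  · rintro hsep S ⟨_, ⟨i, rfl⟩, hS⟩ T ⟨_, ⟨j, rfl⟩, hT⟩ hST
    have hij : i ≠ j := by
      rintro rfl
      exact hST (iso_equivalence.trans hS (iso_equivalence.symm hT))
    have hiso {S R : Md ι ar} (hSR : Iso S R) (S' : Md ι ar) : Iso S' S ↔ Iso S' R :=
      ⟨fun h => iso_equivalence.trans h hSR,
        fun h => iso_equivalence.trans h (iso_equivalence.symm hSR)⟩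
    simpa only [hiso hS, hiso hT] using hsep i j hij

end Learning


/-- for `n ≥ 1` (via the shift: `eqNatPlus n = =_ℕ^{(n+1)+}`,
`SigmaLevel (Md ι ar) (2*n) = Σ⁰_{2(n+1)-1}`), a countable family `{A i : i ∈ ℕ}` of
pairwise nonisomorphic structures is `=_ℕ^{(n+1)+}`-learnable iff any two of its members
are separated (up to isomorphism) by a `Σ⁰_{2(n+1)-1}` set. -/
theorem stmt_12 {ι : Type} [Countable ι] (ar : ι → ℕ) (har : ∃ i, 2 ≤ ar i) (n : ℕ)
    (A : ℕ → Md ι ar) (hA : ∀ i j, i ≠ j → ¬ Iso (A i) (A j)) :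
    Learnable (eqNatPlus n) (Set.range A) ↔
      ∀ i j, i ≠ j → ∃ C ∈ SigmaLevel (Md ι ar) (2 * n),
        ((∀ S, Iso S (A i) → S ∈ C) ∧ (∀ S, Iso S (A j) → S ∉ C)) ∨
        ((∀ S, Iso S (A j) → S ∈ C) ∧ (∀ S, Iso S (A i) → S ∉ C)) :=
  stmt_12_general n A hA
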